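/- Let S ⊆ ℝⁿ be a k-dimensional submanifold of class C^{1,1} and let V be a distribution of k-planes of class C¹ on ℝⁿ which is non-involutive at every point of ℝⁿ. Then ℋ^k(τ(S,V)) = 0. -/

import Mathlib

noncomputable section
open MeasureTheory Set Module Filter Metric
open scoped ENNReal NNReal Topology RealInnerProductSpace

/-- `ℝⁿ` with the Euclidean norm. -/
abbrev Euc (n : ℕ) : Type := EuclideanSpace ℝ (Fin n)

variable {n : ℕ}

/-- A distribution of `k`-planes of class `C¹` on the open set `Ω ⊆ ℝⁿ`:
a map into the Grassmannian `Gr(k,n)` that is locally spanned by `k`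
vector fields of class `C¹`. -/
def IsC1PlaneField (k : ℕ) (Ω : Set (Euc n)) (V : Euc n → Submodule ℝ (Euc n)) : Prop :=
  IsOpen Ω ∧ (∀ x ∈ Ω, finrank ℝ (V x) = k) ∧
    ∀ x ∈ Ω, ∃ U : Set (Euc n), IsOpen U ∧ x ∈ U ∧ U ⊆ Ω ∧
      ∃ X : Fin k → Euc n → Euc n,
        (∀ i, ContDiffOn ℝ 1 (X i) U) ∧
        ∀ y ∈ U, V y = Submodule.span ℝ (Set.range fun i => X i y)

/-- Tangency set of a surface `S` to the plane field `V`: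
points of `S` where the tangent space of `S` (the tangent cone, which for a `C¹`
submanifold is exactly the classical tangent plane) coincides with `V(x)`. -/
def tangencySet (S : Set (Euc n)) (V : Euc n → Submodule ℝ (Euc n)) : Set (Euc n) :=
  {x ∈ S | tangentConeAt ℝ S x = (V x : Set (Euc n))}

/-- The graph map of `f : W → Wᗮ`. -/
def graphMap (W : Submodule ℝ (Euc n)) (f : ↥W → ↥Wᗮ) : ↥W → Euc n :=
  fun z => (z : Euc n) + (f z : Euc n)

/-- Lie bracket of two `C¹` vector fields: `[X,Y](x) = DX_x(Y x) − DY_x(X x)`. -/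
def lieBracket (X Y : Euc n → Euc n) (x : Euc n) : Euc n :=
  fderiv ℝ X x (Y x) - fderiv ℝ Y x (X x)

/-- `V` is involutive at `x` (relative to the open set `Ω`): for every pair of `C¹`
vector fields tangent to `V` on `Ω`, the Lie bracket at `x` lies in `V x`. -/
def InvolutiveAt (Ω : Set (Euc n)) (V : Euc n → Submodule ℝ (Euc n)) (x : Euc n) : Prop :=
  ∀ X Y : Euc n → Euc n, ContDiffOn ℝ 1 X Ω → ContDiffOn ℝ 1 Y Ω →
    (∀ y ∈ Ω, X y ∈ V y) → (∀ y ∈ Ω, Y y ∈ V y) → lieBracket X Y x ∈ V x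

/-- `S` is a `k`-dimensional embedded submanifold of `ℝⁿ` of class `C^{1,1}`:
near each of its points it is the graph, over a `k`-plane `W`, of a `C¹` function
`f : W → Wᗮ` whose gradient is Lipschitz. -/
def IsC11Submanifold (k : ℕ) (S : Set (Euc n)) : Prop :=
  S.Nonempty ∧
  ∀ x ∈ S, ∃ (W : Submodule ℝ (Euc n)) (U : Set ↥W) (f : ↥W → ↥Wᗮ) (O : Set (Euc n)),
    finrank ℝ W = k ∧ IsOpen U ∧ ContDiffOn ℝ 1 f U ∧
    (∃ L : ℝ≥0, LipschitzOnWith L (fun z => fderiv ℝ f z) U) ∧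
    IsOpen O ∧ x ∈ O ∧ S ∩ O = (graphMap W f '' U) ∩ O

open scoped Pointwise in
lemma uniqueDiff_of_density {E : Type*} [NormedAddCommGroup E] [NormedSpace ℝ E]
    [FiniteDimensional ℝ E] [MeasurableSpace E] [BorelSpace E] (μ : Measure E)
    [μ.IsAddHaarMeasure] (s : Set E) (x : E) (hxs : x ∈ s)
    (h : Tendsto (fun r => μ (s ∩ closedBall x r) / μ (closedBall x r)) (𝓝[>] 0) (𝓝 1)) :
    UniqueDiffWithinAt ℝ s x := by
  refine ⟨?_, subset_closure hxs⟩
  have key : tangentConeAt ℝ s x = univ := by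
    refine eq_univ_of_forall fun z => ?_
    have hex : ∀ m : ℕ, ∃ r : ℝ, ∃ a : E, 0 < r ∧ r < 1 / ((m : ℝ) + 1) ∧
        ‖a - z‖ ≤ 1 / ((m : ℝ) + 1) ∧ x + r • a ∈ s := by
      intro m
      have hm : (0 : ℝ) < 1 / ((m : ℝ) + 1) := by positivity
      have B₁ : ∀ᶠ r in 𝓝[>] (0 : ℝ),
          (s ∩ ({x} + r • closedBall z (1 / ((m : ℝ) + 1)))).Nonempty :=
        Measure.eventually_nonempty_inter_smul_of_density_one μ s x h _ measurableSet_closedBall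
          (measure_closedBall_pos μ z hm).ne'
      have B₂ : ∀ᶠ r in 𝓝[>] (0 : ℝ), r < 1 / ((m : ℝ) + 1) :=
        nhdsWithin_le_nhds (Iio_mem_nhds hm)
      obtain ⟨r, ⟨y, ys, hy⟩, hr, rpos⟩ := (B₁.and (B₂.and self_mem_nhdsWithin)).exists
      simp only [mem_smul_set, image_add_left, mem_preimage, singleton_add] at hy
      rcases hy with ⟨a, az, ha⟩
      refine ⟨r, a, rpos, hr, mem_closedBall_iff_norm.1 az, ?_⟩
      rw [ha]; simpa using ys
    choose r a hr0 hr1 ha hs using hex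
    have ha' : Tendsto a atTop (𝓝 z) := by
      rw [tendsto_iff_norm_sub_tendsto_zero]
      exact squeeze_zero (fun _ => norm_nonneg _) ha tendsto_one_div_add_atTop_nhds_zero_nat
    have hr' : Tendsto r atTop (𝓝 0) :=
      squeeze_zero (fun m => (hr0 m).le) (fun m => (hr1 m).le)
        tendsto_one_div_add_atTop_nhds_zero_nat
    refine mem_tangentConeAt_of_seq atTop (fun m => (r m)⁻¹) (fun m => r m • a m) ?_
      (Eventually.of_forall hs) ?_
    · simpa using hr'.smul ha'
    · refine ha'.congr fun m => ?_
      rw [inv_smul_smul₀ (hr0 m).ne']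
  rw [key]
  simp

/-- Derivative of the graph map. -/
def dgraph (W : Submodule ℝ (Euc n)) (f : ↥W → ↥Wᗮ) (z : ↥W) : ↥W →L[ℝ] Euc n :=
  W.subtypeL + Wᗮ.subtypeL ∘L fderiv ℝ f z

lemma hasFDerivAt_graphMap (W : Submodule ℝ (Euc n)) (f : ↥W → ↥Wᗮ) (z : ↥W)
    (h : DifferentiableAt ℝ f z) : HasFDerivAt (graphMap W f) (dgraph W f z) z :=
  W.subtypeL.hasFDerivAt.add (Wᗮ.subtypeL.hasFDerivAt.comp z h.hasFDerivAt)

lemma proj_graphMap (W : Submodule ℝ (Euc n)) (f : ↥W → ↥Wᗮ) (z : ↥W) :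
    W.orthogonalProjectionOnto (graphMap W f z) = z := by
  simp only [graphMap, map_add, Submodule.orthogonalProjectionOnto_mem_subspace_eq_self]
  rw [Submodule.orthogonalProjectionOnto_apply_of_mem_orthogonal (f z).2,
    add_zero]

lemma proj_dgraph (W : Submodule ℝ (Euc n)) (f : ↥W → ↥Wᗮ) (z w : ↥W) :
    W.orthogonalProjectionOnto (dgraph W f z w) = w := by
  have : dgraph W f z w = (w : Euc n) + (fderiv ℝ f z w : Euc n) := rfl
  simp only [this, map_add, Submodule.orthogonalProjectionOnto_mem_subspace_eq_self]
  rw [Submodule.orthogonalProjectionOnto_apply_of_mem_orthogonal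
    (fderiv ℝ f z w).2, add_zero]

/-- Differentiating the tangency relation along a set of unique differentiability. -/
lemma field_deriv (W : Submodule ℝ (Euc n)) (f : ↥W → ↥Wᗮ) (z₀ : ↥W) (E : Set ↥W)
    (hE : UniqueDiffWithinAt ℝ E z₀) (hz : z₀ ∈ E) (hf : DifferentiableAt ℝ f z₀)
    (B : ↥W →L[ℝ] ↥W →L[ℝ] Euc n) (hB : HasFDerivAt (dgraph W f) B z₀)
    (X : Euc n → Euc n) (hX : Differentiable ℝ X)
    (hT : ∀ z ∈ E, dgraph W f z (W.orthogonalProjectionOnto (X (graphMap W f z)))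
      = X (graphMap W f z)) (w : ↥W) :
    fderiv ℝ X (graphMap W f z₀) (dgraph W f z₀ w) =
      B w (W.orthogonalProjectionOnto (X (graphMap W f z₀))) +
      dgraph W f z₀ (W.orthogonalProjectionOnto
        (fderiv ℝ X (graphMap W f z₀) (dgraph W f z₀ w))) := by
  have h1 : HasFDerivAt (fun z => X (graphMap W f z))
      ((fderiv ℝ X (graphMap W f z₀)) ∘L (dgraph W f z₀)) z₀ :=
    (hX _).hasFDerivAt.comp z₀ (hasFDerivAt_graphMap W f z₀ hf)
  have h2 := (W.orthogonalProjectionOnto).hasFDerivAt.comp z₀ h1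
  have h3 := hB.clm_apply h2
  have h4 := h3.hasFDerivWithinAt (s := E)
  have h5 := h4.congr (f₁ := fun z => X (graphMap W f z)) (fun z hz => (hT z hz).symm)
    (hT z₀ hz).symm
  have h6 := hE.eq h1.hasFDerivWithinAt h5
  have h7 := congrArg (fun L => L w) h6
  simpa [add_comm] using h7

lemma bracket_mem (W : Submodule ℝ (Euc n)) (f : ↥W → ↥Wᗮ) (z₀ : ↥W) (E : Set ↥W)
    (V : Euc n → Submodule ℝ (Euc n))
    (hE : UniqueDiffWithinAt ℝ E z₀) (hz : z₀ ∈ E)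
    (hf : ∀ᶠ z in 𝓝 z₀, DifferentiableAt ℝ f z)
    (hf2 : DifferentiableAt ℝ (fderiv ℝ f) z₀)
    (hT : ∀ z ∈ E, (dgraph W f z : ↥W →ₗ[ℝ] Euc n).range = V (graphMap W f z)) :
    InvolutiveAt univ V (graphMap W f z₀) := by
  intro X Y hX hY hXV hYV
  have hX' : Differentiable ℝ X := (contDiffOn_univ.1 hX).differentiable (by norm_num)
  have hY' : Differentiable ℝ Y := (contDiffOn_univ.1 hY).differentiable (by norm_num)
  have hD : DifferentiableAt ℝ (dgraph W f) z₀ := by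
    unfold dgraph
    have h2 : DifferentiableAt ℝ (fun z => Wᗮ.subtypeL ∘L fderiv ℝ f z) z₀ :=
      (differentiableAt_const _).clm_comp hf2
    exact DifferentiableAt.const_add (𝕜 := ℝ) (E := ↥W) (F := ↥W →L[ℝ] Euc n) _ h2
  have hsymm := second_derivative_symmetric_of_eventually
    (hf.mono fun z h => hasFDerivAt_graphMap W f z h) hD.hasFDerivAt
  have hP : ∀ Z : Euc n → Euc n, (∀ y ∈ (univ : Set (Euc n)), Z y ∈ V y) → ∀ z ∈ E,
      dgraph W f z (W.orthogonalProjectionOnto (Z (graphMap W f z))) = Z (graphMap W f z) := by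
    intro Z hZ z hz
    have := hZ (graphMap W f z) (mem_univ _)
    rw [← hT z hz] at this
    obtain ⟨w, hw⟩ := this
    have hw' : dgraph W f z w = Z (graphMap W f z) := hw
    rw [← hw', proj_dgraph]
  have eX := field_deriv W f z₀ E hE hz hf.self_of_nhds _ hD.hasFDerivAt X hX' (hP X hXV)
    (W.orthogonalProjectionOnto (Y (graphMap W f z₀)))
  have eY := field_deriv W f z₀ E hE hz hf.self_of_nhds _ hD.hasFDerivAt Y hY' (hP Y hYV)
    (W.orthogonalProjectionOnto (X (graphMap W f z₀)))
  rw [hP Y hYV z₀ hz] at eX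
  rw [hP X hXV z₀ hz] at eY
  unfold lieBracket
  rw [eX, eY, hsymm, add_sub_add_left_eq_sub, ← map_sub, ← hT z₀ hz]
  exact ⟨_, rfl⟩

lemma range_dgraph (W : Submodule ℝ (Euc n)) (f : ↥W → ↥Wᗮ) (U : Set ↥W) (O S : Set (Euc n))
    (hU : IsOpen U) (hf : ContDiffOn ℝ 1 f U) (hO : IsOpen O)
    (hS : S ∩ O = (graphMap W f '' U) ∩ O) (V : Submodule ℝ (Euc n))
    (hV : finrank ℝ V = finrank ℝ W) (z : ↥W) (hz : z ∈ U) (hzO : graphMap W f z ∈ O)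
    (ht : tangentConeAt ℝ S (graphMap W f z) = (V : Set (Euc n))) :
    (dgraph W f z : ↥W →ₗ[ℝ] Euc n).range = V := by
  have hd : DifferentiableAt ℝ f z :=
    ((hf z hz).contDiffAt (hU.mem_nhds hz)).differentiableAt (by norm_num)
  have hg := hasFDerivAt_graphMap W f z hd
  have hN : U ∩ graphMap W f ⁻¹' O ∈ 𝓝 z :=
    inter_mem (hU.mem_nhds hz) (hg.continuousAt (hO.mem_nhds hzO))
  have hle : (dgraph W f z : ↥W →ₗ[ℝ] Euc n).range ≤ V := by
    rintro _ ⟨w, rfl⟩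
    have h1 := (hg.hasFDerivWithinAt (s := U ∩ graphMap W f ⁻¹' O)).mapsTo_tangent_cone
      (show w ∈ tangentConeAt ℝ _ z by rw [tangentConeAt_of_mem_nhds hN]; trivial)
    have h2 : graphMap W f '' (U ∩ graphMap W f ⁻¹' O) ⊆ S := by
      rintro _ ⟨y, ⟨hy, hyO⟩, rfl⟩
      exact (hS.symm.subset ⟨mem_image_of_mem _ hy, hyO⟩).1
    have h3 := tangentConeAt_mono (𝕜 := ℝ) h2 h1
    rw [ht] at h3
    exact h3
  refine Submodule.eq_of_le_of_finrank_eq hle ?_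
  rw [hV]
  refine LinearMap.finrank_range_of_inj ?_
  intro a b hab
  have hab' : dgraph W f z a = dgraph W f z b := hab
  rw [← proj_dgraph W f z a, hab', proj_dgraph]

/-- Let `S ⊆ ℝⁿ` be a `k`-dimensional submanifold of class `C^{1,1}`
and let `V` be a distribution of `k`-planes of class `C¹` on `ℝⁿ` which is
non-involutive at every point. Then `ℋ^k(τ(S,V)) = 0`. -/
theorem statement19 {n k : ℕ}
    (S : Set (Euc n)) (hS : IsC11Submanifold k S)
    (V : Euc n → Submodule ℝ (Euc n)) (hV : IsC1PlaneField k univ V)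
    (hni : ∀ x : Euc n, ¬ InvolutiveAt univ V x) :
    μH[(k : ℝ)] (tangencySet S V) = 0 := by
  refine measure_null_of_locally_null _ fun x hx => ?_
  obtain ⟨W, U, f, O, hW, hU, hf, ⟨L, hL⟩, hO, hxO, hSO⟩ := hS.2 x hx.1
  obtain ⟨z₀, hz₀, rfl⟩ : x ∈ graphMap W f '' U := (hSO.subset ⟨hx.1, hxO⟩).1
  have hcd : ContDiffAt ℝ 1 f z₀ := (hf z₀ hz₀).contDiffAt (hU.mem_nhds hz₀)
  have hgcd : ContDiffAt ℝ 1 (graphMap W f) z₀ :=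
    W.subtypeL.contDiff.contDiffAt.add (Wᗮ.subtypeL.contDiff.contDiffAt.comp z₀ hcd)
  obtain ⟨K, N, hN, hK⟩ := hgcd.exists_lipschitzOnWith
  set E : Set ↥W := {z ∈ U | graphMap W f z ∈ tangencySet S V ∩ O} with hEdef
  have hrange : ∀ z ∈ E, (dgraph W f z : ↥W →ₗ[ℝ] Euc n).range = V (graphMap W f z) :=
    fun z hz => range_dgraph W f U O S hU hf hO hSO _ ((hV.2.1 _ trivial).trans hW.symm) z hz.1
      hz.2.2 hz.2.1.2
  have hE0 : μH[(k : ℝ)] E = 0 := by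
    subst hW
    have hdiff := hL.ae_differentiableWithinAt_of_mem (μ := (μH[(finrank ℝ W : ℝ)] : Measure ↥W))
    have hdens := Besicovitch.ae_tendsto_measure_inter_div
      (μH[(finrank ℝ W : ℝ)] : Measure ↥W) E
    rw [ae_iff] at hdiff hdens
    have hdens' := le_antisymm ((Measure.le_restrict_apply _ _).trans hdens.le) (zero_le)
    refine measure_mono_null ?_ (measure_union_null hdiff hdens')
    intro z hz
    by_contra hcon
    simp only [mem_union, mem_inter_iff, mem_ofPred_eq, not_or, not_and, not_not] at hcon
    have hd := hcon.1 hz.1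
    have hden : Tendsto (fun r => (μH[(finrank ℝ W : ℝ)] : Measure ↥W) (E ∩ closedBall z r) /
        (μH[(finrank ℝ W : ℝ)] : Measure ↥W) (closedBall z r)) (𝓝[>] 0) (𝓝 1) := by
      by_contra hne
      exact hcon.2 hne hz
    refine hni (graphMap W f z) (bracket_mem W f z E V
      (uniqueDiff_of_density _ E z hz hden) hz ?_ (hd.differentiableAt (hU.mem_nhds hz.1)) hrange)
    filter_upwards [hU.mem_nhds hz.1] with y hy
    exact ((hf y hy).contDiffAt (hU.mem_nhds hy)).differentiableAt (by norm_num)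
  have himg : μH[(k : ℝ)] (graphMap W f '' (E ∩ N)) = 0 := by
    have h1 := (hK.mono inter_subset_right : LipschitzOnWith K (graphMap W f) (E ∩ N)
      ).hausdorffMeasure_image_le (d := (k : ℝ)) (Nat.cast_nonneg k)
    rw [measure_mono_null inter_subset_left hE0, mul_zero] at h1
    exact le_antisymm h1 (zero_le)
  refine ⟨graphMap W f '' (E ∩ N), ?_, himg⟩
  have hP : (W.orthogonalProjectionOnto : Euc n → ↥W) ⁻¹' N ∈ 𝓝 (graphMap W f z₀) := by
    refine W.orthogonalProjectionOnto.continuous.continuousAt ?_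
    rw [proj_graphMap]; exact hN
  filter_upwards [self_mem_nhdsWithin, mem_nhdsWithin_of_mem_nhds (hO.mem_nhds hxO),
    mem_nhdsWithin_of_mem_nhds hP] with y hyT hyO hyN
  obtain ⟨z, hz, rfl⟩ := (hSO.subset ⟨hyT.1, hyO⟩).1
  rw [mem_preimage, proj_graphMap] at hyN
  exact ⟨z, ⟨⟨hz, hyT, hyO⟩, hyN⟩, rfl⟩
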